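/- Let M ∈ ℂ^{p×p} be invertible and let A, B ∈ ℂ^{n×n×p} be *_M-pseudo-positive-definite. The tensor geometric mean A #_M B = A^{1/2} *_M (A^{−1/2} *_M B *_M A^{−1/2})^{1/2} *_M A^{1/2} satisfies: (i) idempotence: A #_M A = A; (ii) inversion order-reversing: (A #_M B)⁻¹ = B⁻¹ #_M A⁻¹; (iii) commutativity: A #_M B = B #_M A; (iv) congruence invariance: for every *_M-invertible C ∈ ℂ^{n×n×p}, (Cᴴ *_M A *_M C) #_M (Cᴴ *_M B *_M C) = Cᴴ *_M (A #_M B) *_M C; (v) joint homogeneity: for every real c > 0, (cA) #_M (cB) = c(A #_M B); (vi) consistency with scalars: for reals a, b > 0 and the *_M-identity tensor I, (aI) #_M (bI) = √(ab) I. -/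

import Mathlib

open Matrix
open scoped ComplexOrder

attribute [local instance] Classical.propDecidable

noncomputable section

/-- Mode-3 product of a third-order complex tensor (stack of `p` frontal slices)
with a matrix `M ∈ ℂ^{q×p}`: `(A ×₃ M)ₖ = Σ_l M k l • A l`. -/
def mode3 {m n p q : ℕ} (M : Matrix (Fin q) (Fin p) ℂ)
    (A : Fin p → Matrix (Fin m) (Fin n) ℂ) : Fin q → Matrix (Fin m) (Fin n) ℂ :=
  fun k => ∑ l, M k l • A l

/-- Face-wise product of two third-order tensors. -/
def facewise {m n s p : ℕ} (A : Fin p → Matrix (Fin m) (Fin n) ℂ)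
    (B : Fin p → Matrix (Fin n) (Fin s) ℂ) : Fin p → Matrix (Fin m) (Fin s) ℂ :=
  fun i => A i * B i

/-- Tensor-tensor multiplication with an invertible `M ∈ ℂ^{p×p}`:
`A *_M B = ((A ×₃ M) △ (B ×₃ M)) ×₃ M⁻¹`. -/
def tmul3 {m n s p : ℕ} (M : Matrix (Fin p) (Fin p) ℂ)
    (A : Fin p → Matrix (Fin m) (Fin n) ℂ) (B : Fin p → Matrix (Fin n) (Fin s) ℂ) :
    Fin p → Matrix (Fin m) (Fin s) ℂ :=
  mode3 M⁻¹ (facewise (mode3 M A) (mode3 M B))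

/-- `A ∈ ℂ^{n×n×p}` is `*_M`-pseudo-positive-definite if every frontal slice of
`A ×₃ M` is (Hermitian) positive-definite. -/
def PseudoPD {n p : ℕ} (M : Matrix (Fin p) (Fin p) ℂ)
    (A : Fin p → Matrix (Fin n) (Fin n) ℂ) : Prop :=
  ∀ i, (mode3 M A i).PosDef

/-- The `*_M`-identity tensor: all frontal slices of `I ×₃ M` equal `I_n`. -/
def tId {p : ℕ} (n : ℕ) (M : Matrix (Fin p) (Fin p) ℂ) :
    Fin p → Matrix (Fin n) (Fin n) ℂ :=
  mode3 M⁻¹ (fun _ => 1)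

/-- The `*_M`-inverse of a tensor (the unique two-sided inverse when it exists). -/
def tinv {n p : ℕ} (M : Matrix (Fin p) (Fin p) ℂ)
    (A : Fin p → Matrix (Fin n) (Fin n) ℂ) : Fin p → Matrix (Fin n) (Fin n) ℂ :=
  if h : ∃ X, tmul3 M A X = tId n M ∧ tmul3 M X A = tId n M then h.choose else 0

/-- The `*_M`-pseudo-positive-definite square root of a tensor (the unique
pseudo-positive-definite `B` with `B *_M B = A`, when it uniquely exists). -/
def tsqrt {n p : ℕ} (M : Matrix (Fin p) (Fin p) ℂ)
    (A : Fin p → Matrix (Fin n) (Fin n) ℂ) : Fin p → Matrix (Fin n) (Fin n) ℂ :=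
  if h : ∃! B, PseudoPD M B ∧ tmul3 M B B = A then h.choose else 0

/-- The tensor geometric mean
`A #_M B = A^{1/2} *_M (A^{−1/2} *_M B *_M A^{−1/2})^{1/2} *_M A^{1/2}`,
where `A^{−1/2} = (A^{1/2})⁻¹`. -/
def geomean {n p : ℕ} (M : Matrix (Fin p) (Fin p) ℂ)
    (A B : Fin p → Matrix (Fin n) (Fin n) ℂ) : Fin p → Matrix (Fin n) (Fin n) ℂ :=
  tmul3 M (tmul3 M (tsqrt M A)
    (tsqrt M (tmul3 M (tmul3 M (tinv M (tsqrt M A)) B) (tinv M (tsqrt M A)))))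
    (tsqrt M A)

end

/-- The `*_M`-conjugate-transpose: `(Cᴴ ×₃ M)⁽ⁱ⁾ = ((C ×₃ M)⁽ⁱ⁾)ᴴ`. -/
noncomputable def tconjT {n p : ℕ} (M : Matrix (Fin p) (Fin p) ℂ)
    (C : Fin p → Matrix (Fin n) (Fin n) ℂ) : Fin p → Matrix (Fin n) (Fin n) ℂ :=
  mode3 M⁻¹ (fun i => (mode3 M C i)ᴴ)

section SquareRoot

open scoped MatrixOrder

theorem Matrix.PosDef.exists_posDef_mul_self {n : ℕ} {A : Matrix (Fin n) (Fin n) ℂ}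
    (hA : A.PosDef) : ∃ S : Matrix (Fin n) (Fin n) ℂ, S.PosDef ∧ S * S = A := by
  have hS : CFC.sqrt A * CFC.sqrt A = A := CFC.sqrt_mul_sqrt_self A hA.posSemidef.nonneg
  refine ⟨CFC.sqrt A, ?_, hS⟩
  rw [(CFC.sqrt_nonneg A).posSemidef.posDef_iff_isUnit]
  have hu : IsUnit (CFC.sqrt A * CFC.sqrt A) := hS.symm ▸ hA.isUnit
  rw [Matrix.isUnit_iff_isUnit_det, Matrix.det_mul] at hu
  exact (Matrix.isUnit_iff_isUnit_det _).2 (isUnit_of_mul_isUnit_left hu)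

theorem Matrix.PosDef.eq_of_mul_self_eq {n : ℕ} {S T : Matrix (Fin n) (Fin n) ℂ}
    (hS : S.PosDef) (hT : T.PosDef) (h : S * S = T * T) : S = T :=
  (CFC.mul_self_eq_mul_self_iff S T hS.posSemidef.nonneg hT.posSemidef.nonneg).1 h

end SquareRoot

theorem Matrix.PosDef.isUnit_det {n : ℕ} {A : Matrix (Fin n) (Fin n) ℂ}
    (hA : A.PosDef) : IsUnit A.det :=
  (Matrix.isUnit_iff_isUnit_det A).1 hA.isUnit

theorem Matrix.PosDef.conjTranspose_mul_mul_of_isUnit_det {n : ℕ}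
    {A C : Matrix (Fin n) (Fin n) ℂ} (hA : A.PosDef) (hC : IsUnit C.det) :
    (Cᴴ * A * C).PosDef :=
  hA.conjTranspose_mul_mul_same
    (Matrix.mulVec_injective_of_isUnit ((Matrix.isUnit_iff_isUnit_det C).2 hC))

theorem Matrix.PosDef.mul_mul_self {n : ℕ} {A S : Matrix (Fin n) (Fin n) ℂ}
    (hA : A.PosDef) (hS : S.PosDef) : (S * A * S).PosDef := by
  simpa only [hS.isHermitian.eq] using hA.conjTranspose_mul_mul_of_isUnit_det hS.isUnit_det

theorem Matrix.inv_smul_of_ne_zero {n : ℕ} {A : Matrix (Fin n) (Fin n) ℂ} {c : ℂ}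
    (hc : c ≠ 0) (hA : IsUnit A.det) : (c • A)⁻¹ = c⁻¹ • A⁻¹ := by
  apply Matrix.inv_eq_right_inv
  rw [smul_mul_assoc, mul_smul_comm, smul_smul, mul_inv_cancel₀ hc, one_smul,
    Matrix.mul_nonsing_inv _ hA]

section Transform

variable {m n s p : ℕ} {M : Matrix (Fin p) (Fin p) ℂ}

theorem mode3_mul {q r : ℕ} (M : Matrix (Fin r) (Fin q) ℂ) (N : Matrix (Fin q) (Fin p) ℂ)
    (A : Fin p → Matrix (Fin m) (Fin n) ℂ) : mode3 M (mode3 N A) = mode3 (M * N) A := by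
  funext k
  simp only [mode3, Matrix.mul_apply, Finset.smul_sum, Finset.sum_smul, mul_smul]
  exact Finset.sum_comm

theorem mode3_one (A : Fin p → Matrix (Fin m) (Fin n) ℂ) : mode3 1 A = A := by
  funext k
  simp [mode3, Matrix.one_apply, ite_smul]

theorem mode3_smul (c : ℂ) (A : Fin p → Matrix (Fin m) (Fin n) ℂ) (i : Fin p) :
    mode3 M (c • A) i = c • mode3 M A i := by
  simp only [mode3, Finset.smul_sum, Pi.smul_apply]
  exact Finset.sum_congr rfl fun _ _ => smul_comm _ _ _

theorem mode3_mode3_inv (hM : IsUnit M.det) (A : Fin p → Matrix (Fin m) (Fin n) ℂ) :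
    mode3 M (mode3 M⁻¹ A) = A := by
  rw [mode3_mul, Matrix.mul_nonsing_inv _ hM, mode3_one]

theorem mode3_inv_mode3 (hM : IsUnit M.det) (A : Fin p → Matrix (Fin m) (Fin n) ℂ) :
    mode3 M⁻¹ (mode3 M A) = A := by
  rw [mode3_mul, Matrix.nonsing_inv_mul _ hM, mode3_one]

theorem ext_mode3 (hM : IsUnit M.det) {A B : Fin p → Matrix (Fin m) (Fin n) ℂ}
    (h : ∀ i, mode3 M A i = mode3 M B i) : A = B := by
  rw [← mode3_inv_mode3 hM A, ← mode3_inv_mode3 hM B, funext h]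

theorem mode3_tmul3 (hM : IsUnit M.det) (A : Fin p → Matrix (Fin m) (Fin n) ℂ)
    (B : Fin p → Matrix (Fin n) (Fin s) ℂ) (i : Fin p) :
    mode3 M (tmul3 M A B) i = mode3 M A i * mode3 M B i := by
  rw [tmul3, mode3_mode3_inv hM, facewise]

theorem mode3_tId (hM : IsUnit M.det) (i : Fin p) : mode3 M (tId n M) i = 1 := by
  rw [tId, mode3_mode3_inv hM]

theorem mode3_tconjT (hM : IsUnit M.det) (C : Fin p → Matrix (Fin n) (Fin n) ℂ) (i : Fin p) :
    mode3 M (tconjT M C) i = (mode3 M C i)ᴴ := by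
  rw [tconjT, mode3_mode3_inv hM]

theorem mode3_tinv (hM : IsUnit M.det) {A : Fin p → Matrix (Fin n) (Fin n) ℂ}
    (hA : ∀ i, IsUnit (mode3 M A i).det) (i : Fin p) :
    mode3 M (tinv M A) i = (mode3 M A i)⁻¹ := by
  have h : ∃ X, tmul3 M A X = tId n M ∧ tmul3 M X A = tId n M := by
    refine ⟨mode3 M⁻¹ fun i => (mode3 M A i)⁻¹, ext_mode3 hM fun i => ?_,
      ext_mode3 hM fun i => ?_⟩
    · rw [mode3_tmul3 hM, mode3_mode3_inv hM, mode3_tId hM, Matrix.mul_nonsing_inv _ (hA i)]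
    · rw [mode3_tmul3 hM, mode3_mode3_inv hM, mode3_tId hM, Matrix.nonsing_inv_mul _ (hA i)]
  rw [tinv, dif_pos h]
  have hX := congrFun (congrArg (mode3 M) h.choose_spec.1) i
  rw [mode3_tmul3 hM, mode3_tId hM] at hX
  exact (Matrix.inv_eq_right_inv hX).symm

theorem tsqrt_eq (hM : IsUnit M.det) {A S : Fin p → Matrix (Fin n) (Fin n) ℂ}
    (hS : PseudoPD M S) (h : ∀ i, mode3 M S i * mode3 M S i = mode3 M A i) :
    tsqrt M A = S := by
  have hS' : tmul3 M S S = A := ext_mode3 hM fun i => by rw [mode3_tmul3 hM, h]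
  have hex : ∃! B, PseudoPD M B ∧ tmul3 M B B = A := by
    refine ⟨S, ⟨hS, hS'⟩, fun T hT => ext_mode3 hM fun i => ?_⟩
    refine (hT.1 i).eq_of_mul_self_eq (hS i) ?_
    rw [← mode3_tmul3 hM, hT.2, h]
  rw [tsqrt, dif_pos hex]
  exact hex.unique hex.choose_spec.1 ⟨hS, hS'⟩

theorem PseudoPD.exists_mul_self (hM : IsUnit M.det) {A : Fin p → Matrix (Fin n) (Fin n) ℂ}
    (hA : PseudoPD M A) :
    ∃ S, PseudoPD M S ∧ ∀ i, mode3 M S i * mode3 M S i = mode3 M A i := by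
  choose S hS hSA using fun i => (hA i).exists_posDef_mul_self
  refine ⟨mode3 M⁻¹ S, fun i => ?_, fun i => ?_⟩
  · rw [mode3_mode3_inv hM]
    exact hS i
  · rw [mode3_mode3_inv hM]
    exact hSA i

theorem PseudoPD.mode3_tinv (hM : IsUnit M.det) {A : Fin p → Matrix (Fin n) (Fin n) ℂ}
    (hA : PseudoPD M A) (i : Fin p) : mode3 M (tinv M A) i = (mode3 M A i)⁻¹ :=
  _root_.mode3_tinv hM (fun i => (hA i).isUnit_det) i

theorem PseudoPD.tinv (hM : IsUnit M.det) {A : Fin p → Matrix (Fin n) (Fin n) ℂ}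
    (hA : PseudoPD M A) : PseudoPD M (tinv M A) := fun i => by
  rw [hA.mode3_tinv hM]
  exact (hA i).inv

theorem PseudoPD.smul {A : Fin p → Matrix (Fin n) (Fin n) ℂ} (hA : PseudoPD M A)
    {c : ℝ} (hc : 0 < c) : PseudoPD M ((c : ℂ) • A) := fun i => by
  rw [mode3_smul]
  exact (hA i).smul (Complex.zero_lt_real.2 hc)

theorem pseudoPD_tId (hM : IsUnit M.det) : PseudoPD M (tId n M) := fun i => by
  rw [mode3_tId hM]
  exact Matrix.PosDef.one

/-- The geometric mean is the pseudo-positive-definite solution `G` of the Riccati equation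
`G *_M A⁻¹ *_M G = B`, read slicewise in the transform domain. -/
theorem geomean_eq_of_riccati (hM : IsUnit M.det) {A B G : Fin p → Matrix (Fin n) (Fin n) ℂ}
    (hA : PseudoPD M A) (hG : PseudoPD M G)
    (h : ∀ i, mode3 M G i * (mode3 M A i)⁻¹ * mode3 M G i = mode3 M B i) :
    geomean M A B = G := by
  obtain ⟨S, hS, hSA⟩ := hA.exists_mul_self hM
  have hdet := fun i => (hS i).isUnit_det
  rw [geomean, tsqrt_eq hM hS hSA,
    tsqrt_eq hM (S := tmul3 M (tmul3 M (tinv M S) G) (tinv M S))]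
  · refine ext_mode3 hM fun i => ?_
    simp only [mode3_tmul3 hM, hS.mode3_tinv hM, Matrix.mul_assoc,
      Matrix.nonsing_inv_mul _ (hdet i), Matrix.mul_one,
      Matrix.mul_nonsing_inv_cancel_left _ _ (hdet i)]
  · intro i
    simp only [mode3_tmul3 hM, hS.mode3_tinv hM]
    exact (hG i).mul_mul_self (hS i).inv
  · intro i
    simp only [mode3_tmul3 hM, hS.mode3_tinv hM, ← h i, ← hSA i, Matrix.mul_inv_rev,
      Matrix.mul_assoc]

theorem exists_riccati (hM : IsUnit M.det) {A B : Fin p → Matrix (Fin n) (Fin n) ℂ}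
    (hA : PseudoPD M A) (hB : PseudoPD M B) :
    ∃ G, PseudoPD M G ∧
      ∀ i, mode3 M G i * (mode3 M A i)⁻¹ * mode3 M G i = mode3 M B i := by
  obtain ⟨S, hS, hSA⟩ := hA.exists_mul_self hM
  have hdet := fun i => (hS i).isUnit_det
  have hK : PseudoPD M (tmul3 M (tmul3 M (tinv M S) B) (tinv M S)) := fun i => by
    simp only [mode3_tmul3 hM, hS.mode3_tinv hM]
    exact (hB i).mul_mul_self (hS i).inv
  obtain ⟨R, hR, hRK⟩ := hK.exists_mul_self hM
  refine ⟨tmul3 M (tmul3 M S R) S, fun i => ?_, fun i => ?_⟩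
  · simp only [mode3_tmul3 hM]
    exact (hR i).mul_mul_self (hS i)
  · have hRi := hRK i
    simp only [mode3_tmul3 hM, hS.mode3_tinv hM] at hRi
    calc mode3 M (tmul3 M (tmul3 M S R) S) i * (mode3 M A i)⁻¹ *
          mode3 M (tmul3 M (tmul3 M S R) S) i
        = mode3 M S i * (mode3 M R i * mode3 M R i) * mode3 M S i := by
          simp only [mode3_tmul3 hM, ← hSA i, Matrix.mul_inv_rev, Matrix.mul_assoc,
            Matrix.mul_nonsing_inv_cancel_left _ _ (hdet i),
            Matrix.nonsing_inv_mul_cancel_left _ _ (hdet i)]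
      _ = mode3 M B i := by
          simp only [hRi, Matrix.mul_assoc, Matrix.nonsing_inv_mul _ (hdet i), Matrix.mul_one,
            Matrix.mul_nonsing_inv_cancel_left _ _ (hdet i)]

end Transform

/-- properties of the tensor geometric mean for invertible
`M ∈ ℂ^{p×p}` and `*_M`-pseudo-positive-definite `A, B ∈ ℂ^{n×n×p}`:
(i) idempotence, (ii) inversion order-reversing, (iii) commutativity,
(iv) congruence invariance, (v) joint homogeneity, (vi) consistency with scalars. -/
theorem geomean_properties {n p : ℕ} (M : Matrix (Fin p) (Fin p) ℂ)
    (hM : IsUnit M.det) (A B : Fin p → Matrix (Fin n) (Fin n) ℂ)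
    (hA : PseudoPD M A) (hB : PseudoPD M B) :
    geomean M A A = A ∧
    tinv M (geomean M A B) = geomean M (tinv M B) (tinv M A) ∧
    geomean M A B = geomean M B A ∧
    (∀ C : Fin p → Matrix (Fin n) (Fin n) ℂ,
      (∃ X, tmul3 M C X = tId n M ∧ tmul3 M X C = tId n M) →
        geomean M (tmul3 M (tmul3 M (tconjT M C) A) C)
            (tmul3 M (tmul3 M (tconjT M C) B) C)
          = tmul3 M (tmul3 M (tconjT M C) (geomean M A B)) C) ∧
    (∀ c : ℝ, 0 < c →
      geomean M ((c : ℂ) • A) ((c : ℂ) • B) = (c : ℂ) • geomean M A B) ∧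
    (∀ a b : ℝ, 0 < a → 0 < b →
      geomean M ((a : ℂ) • tId n M) ((b : ℂ) • tId n M)
        = ((Real.sqrt (a * b) : ℝ) : ℂ) • tId n M) := by
  have hAd := fun i => (hA i).isUnit_det
  obtain ⟨G, hG, hGA⟩ := exists_riccati hM hA hB
  have hGd := fun i => (hG i).isUnit_det
  have hGinv : ∀ i, mode3 M G i * (mode3 M B i)⁻¹ * mode3 M G i = mode3 M A i := fun i => by
    have := Matrix.nonsing_inv_nonsing_inv _ (hAd i)
    simp only [← hGA i, Matrix.mul_inv_rev, this, Matrix.mul_assoc,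
      Matrix.nonsing_inv_mul _ (hGd i), Matrix.mul_one,
      Matrix.mul_nonsing_inv_cancel_left _ _ (hGd i)]
  have hAB : geomean M A B = G := geomean_eq_of_riccati hM hA hG hGA
  rw [hAB]
  refine ⟨?_, ?_, ?_, ?_, ?_, ?_⟩
  · refine geomean_eq_of_riccati hM hA hA fun i => ?_
    rw [Matrix.mul_nonsing_inv _ (hAd i), Matrix.one_mul]
  · refine (geomean_eq_of_riccati hM (hB.tinv hM) (hG.tinv hM) fun i => ?_).symm
    simp only [hA.mode3_tinv hM, hB.mode3_tinv hM, hG.mode3_tinv hM, ← hGinv i,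
      Matrix.mul_inv_rev, Matrix.mul_assoc]
  · exact (geomean_eq_of_riccati hM hB hG hGinv).symm
  · rintro C ⟨X, hCX, -⟩
    have hCd : ∀ i, IsUnit (mode3 M C i).det := fun i => by
      have h := congrFun (congrArg (mode3 M) hCX) i
      rw [mode3_tmul3 hM, mode3_tId hM] at h
      exact Matrix.isUnit_det_of_right_inverse h
    have hCHd : ∀ i, IsUnit ((mode3 M C i)ᴴ).det := fun i => by
      rw [Matrix.det_conjTranspose]
      exact (hCd i).star
    have hcongr : ∀ {D : Fin p → Matrix (Fin n) (Fin n) ℂ}, PseudoPD M D →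
        PseudoPD M (tmul3 M (tmul3 M (tconjT M C) D) C) := fun hD i => by
      simp only [mode3_tmul3 hM, mode3_tconjT hM]
      exact (hD i).conjTranspose_mul_mul_of_isUnit_det (hCd i)
    refine geomean_eq_of_riccati hM (hcongr hA) (hcongr hG) fun i => ?_
    simp only [mode3_tmul3 hM, mode3_tconjT hM, ← hGA i, Matrix.mul_inv_rev, Matrix.mul_assoc,
      Matrix.mul_nonsing_inv_cancel_left _ _ (hCd i),
      Matrix.nonsing_inv_mul_cancel_left _ _ (hCHd i)]
  · intro c hc
    have hc' : (c : ℂ) ≠ 0 := Complex.ofReal_ne_zero.2 hc.ne'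
    refine geomean_eq_of_riccati hM (hA.smul hc) (hG.smul hc) fun i => ?_
    simp only [mode3_smul, ← hGA i, Matrix.inv_smul_of_ne_zero hc' (hAd i), smul_mul_assoc,
      mul_smul_comm, smul_smul, inv_mul_cancel₀ hc', mul_one]
  · intro a b ha hb
    have ha' : (a : ℂ) ≠ 0 := Complex.ofReal_ne_zero.2 ha.ne'
    refine geomean_eq_of_riccati hM ((pseudoPD_tId hM).smul ha)
      ((pseudoPD_tId hM).smul (Real.sqrt_pos.2 (mul_pos ha hb))) fun i => ?_
    have hinv := Matrix.inv_smul_of_ne_zero ha' (Matrix.PosDef.one (n := Fin n)).isUnit_det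
    have hsq : ((Real.sqrt (a * b) : ℝ) : ℂ) * ((Real.sqrt (a * b) : ℝ) : ℂ) = a * b := by
      exact_mod_cast Real.mul_self_sqrt (mul_pos ha hb).le
    simp only [mode3_smul, mode3_tId hM, hinv, inv_one, smul_mul_assoc, mul_smul_comm,
      Matrix.one_mul, smul_smul]
    congr 1
    rw [mul_left_comm, hsq, inv_mul_cancel_left₀ ha']
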